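/- arXiv:1209.4632 — 2 statements merged into one kernel-verified Lean document; each statement's English description precedes it below -/
import Mathlib

section
/- For every even positive integer m, the real polynomial Bohnenblust–Hille constant satisfies D_{ℝ,m} ≥ (3^{m/2})^{(m+1)/(2m)} / (5/4)^{m/2}. -/
open MvPolynomial Filter

/-- The sup norm of a real polynomial in `n` variables over the cube `[-1,1]^n`. -/
noncomputable def supNorm {n : ℕ} (P : MvPolynomial (Fin n) ℝ) : ℝ :=
  sSup {y : ℝ | ∃ x : Fin n → ℝ, (∀ i, |x i| ≤ 1) ∧ y = |eval x P|}

/-- The `ℓ_p` norm of the coefficients of a real polynomial. -/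
noncomputable def lpNorm {n : ℕ} (p : ℝ) (P : MvPolynomial (Fin n) ℝ) : ℝ :=
  (∑ α ∈ P.support, |coeff α P| ^ p) ^ (1 / p)

/-- The real polynomial Bohnenblust–Hille constant `D_{ℝ,m}`. -/
noncomputable def BHconst (m : ℕ) : ℝ :=
  sInf {D : ℝ | 0 < D ∧ ∀ (n : ℕ) (P : MvPolynomial (Fin n) ℝ),
    P.IsHomogeneous m → lpNorm (2 * m / (m + 1)) P ≤ D * supNorm P}

/-- The real polynomial Bohnenblust–Hille constant `D_{ℝ,m}(n)` in a fixed number `n`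
of variables. -/
noncomputable def BHconstN (m n : ℕ) : ℝ :=
  sInf {D : ℝ | 0 < D ∧ ∀ P : MvPolynomial (Fin n) ℝ,
    P.IsHomogeneous m → lpNorm (2 * m / (m + 1)) P ≤ D * supNorm P}


/-- sign of a boolean -/
def sg (b : Bool) : ℝ := if b then 1 else -1

lemma sg_abs (b : Bool) : |sg b| = 1 := by cases b <;> simp [sg]

lemma sum_fin_succ_fun {X : Type*} [Fintype X] (m : ℕ) (F : (Fin (m+1) → X) → ℝ) :
    ∑ e, F e = ∑ a : X, ∑ e : Fin m → X, F (Fin.cons a e) := by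
  rw [← Fintype.sum_prod_type']
  exact (Fintype.sum_equiv (Fin.consEquiv (fun _ : Fin (m+1) => X)) _ _ (fun _ => rfl)).symm

lemma kh2 (n : ℕ) (g : Fin n → ℝ) :
    ∑ e : Fin n → Bool, (∑ j, sg (e j) * g j)^2 = 2^n * ∑ j, g j^2 := by
  induction n with
  | zero => simp
  | succ n ih =>
    rw [sum_fin_succ_fun]
    simp only [Fintype.sum_bool, Fin.sum_univ_succ, Fin.cons_zero, Fin.cons_succ]
    rw [← Finset.sum_add_distrib]
    have := ih (fun j => g j.succ)
    have h : ∀ e : Fin n → Bool, (sg true * g 0 + ∑ i : Fin n, sg (e i) * g i.succ)^2 +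
      (sg false * g 0 + ∑ i : Fin n, sg (e i) * g i.succ)^2
      = 2 * g 0^2 + 2 * (∑ i : Fin n, sg (e i) * g i.succ)^2 := by
      intro e; simp only [sg]; simp; ring
    simp only [h]
    rw [Finset.sum_add_distrib, ← Finset.mul_sum (f := fun e : Fin n → Bool => (∑ i : Fin n, sg (e i) * g i.succ)^2), this]
    simp only [Finset.sum_const, Finset.card_univ, Fintype.card_fun, Fintype.card_bool, Fintype.card_fin, nsmul_eq_mul]
    push_cast
    ring

lemma kh4 (n : ℕ) (g : Fin n → ℝ) :
    ∑ e : Fin n → Bool, (∑ j, sg (e j) * g j)^4 ≤ 3 * 2^n * (∑ j, g j^2)^2 := by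
  induction n with
  | zero => simp
  | succ n ih =>
    rw [sum_fin_succ_fun]
    simp only [Fintype.sum_bool, Fin.sum_univ_succ, Fin.cons_zero, Fin.cons_succ]
    rw [← Finset.sum_add_distrib]
    have h4 := ih (fun j => g j.succ)
    have h2 := kh2 n (fun j => g j.succ)
    have h : ∀ e : Fin n → Bool, (sg true * g 0 + ∑ i : Fin n, sg (e i) * g i.succ)^4 +
      (sg false * g 0 + ∑ i : Fin n, sg (e i) * g i.succ)^4
      = 2 * g 0^4 + 12 * g 0^2 * (∑ i : Fin n, sg (e i) * g i.succ)^2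
        + 2 * (∑ i : Fin n, sg (e i) * g i.succ)^4 := by
      intro e; simp only [sg]; simp; ring
    simp only [h]
    rw [Finset.sum_add_distrib, Finset.sum_add_distrib,
      ← Finset.mul_sum (f := fun e : Fin n → Bool => (∑ i : Fin n, sg (e i) * g i.succ)^2),
      ← Finset.mul_sum (f := fun e : Fin n → Bool => (∑ i : Fin n, sg (e i) * g i.succ)^4), h2]
    simp only [Finset.sum_const, Finset.card_univ, Fintype.card_fun, Fintype.card_bool, Fintype.card_fin, nsmul_eq_mul]
    push_cast
    have : (0:ℝ) ≤ 2^n * g 0^4 := by positivity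
    rw [pow_succ (2:ℝ) n]
    nlinarith

/-- multilinear form with coefficients A -/
def ml {m n : ℕ} (A : (Fin m → Fin n) → ℝ) (x : Fin m → Fin n → ℝ) : ℝ :=
  ∑ i, A i * ∏ l, x l (i l)

lemma ml_succ {m n : ℕ} (A : (Fin (m+1) → Fin n) → ℝ) (x : Fin (m+1) → Fin n → ℝ) :
    ml A x = ∑ j, x 0 j * ml (fun i => A (Fin.cons j i)) (fun l => x l.succ) := by
  unfold ml
  rw [sum_fin_succ_fun]
  refine Finset.sum_congr rfl fun j _ => ?_
  rw [Finset.mul_sum]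
  refine Finset.sum_congr rfl fun i _ => ?_
  rw [Fin.prod_univ_succ]
  simp
  ring

/-- number of sign patterns -/
noncomputable def NN (m n : ℕ) : ℝ := (2^n)^m

lemma ch2 (m n : ℕ) (A : (Fin m → Fin n) → ℝ) :
    ∑ e : Fin m → Fin n → Bool, (ml A (fun l j => sg (e l j)))^2 = NN m n * ∑ i, A i^2 := by
  induction m with
  | zero => simp [ml, NN]
  | succ m ih =>
    rw [sum_fin_succ_fun, Finset.sum_comm]
    simp only [ml_succ, Fin.cons_zero, Fin.cons_succ, kh2]
    rw [← Finset.mul_sum, Finset.sum_comm]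
    simp only [ih]
    rw [← Finset.mul_sum, sum_fin_succ_fun]
    simp only [NN]; ring

lemma ch4 (m n : ℕ) (A : (Fin m → Fin n) → ℝ) :
    ∑ e : Fin m → Fin n → Bool, (ml A (fun l j => sg (e l j)))^4
      ≤ 3^m * NN m n * (∑ i, A i^2)^2 := by
  induction m with
  | zero => simp [ml, NN]; apply le_of_eq; ring
  | succ m ih =>
    rw [sum_fin_succ_fun, Finset.sum_comm]
    simp only [ml_succ, Fin.cons_zero, Fin.cons_succ]
    refine (Finset.sum_le_sum fun e _ => kh4 n _).trans ?_
    rw [← Finset.mul_sum]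
    set G : Fin n → (Fin m → Fin n → Bool) → ℝ :=
      fun j e => ml (fun i => A (Fin.cons j i)) (fun l j => sg (e l j)) with hG
    set a : Fin n → ℝ := fun j => ∑ i, A (Fin.cons j i)^2 with ha
    have hN : 0 ≤ 3^m * NN m n := by unfold NN; positivity
    have ha0 : ∀ j, 0 ≤ a j := fun j => Finset.sum_nonneg fun i _ => sq_nonneg _
    have hG4 : ∀ j, ∑ e, (G j e)^4 ≤ 3^m * NN m n * a j^2 := fun j => ih _
    have hc : ∀ j k, ∑ e, (G j e)^2 * (G k e)^2 ≤ 3^m * NN m n * (a j * a k) := by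
      intro j k
      refine abs_le_of_sq_le_sq' ?_ (mul_nonneg hN (mul_nonneg (ha0 j) (ha0 k))) |>.2
      refine (Finset.sum_mul_sq_le_sq_mul_sq _ _ _).trans ?_
      simp only [← pow_mul]
      have := mul_le_mul (hG4 j) (hG4 k) (Finset.sum_nonneg fun i _ => by positivity)
        (by positivity)
      refine this.trans (le_of_eq (by ring))
    have e1 : ∑ e, (∑ j, (G j e)^2)^2 ≤ 3^m * NN m n * (∑ j, a j)^2 := by
      have : ∀ e, (∑ j, (G j e)^2)^2 = ∑ j, ∑ k, (G j e)^2 * (G k e)^2 := by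
        intro e; rw [sq, Finset.sum_mul_sum]
      simp only [this]
      rw [Finset.sum_comm, sq, Finset.sum_mul_sum, Finset.mul_sum]
      refine Finset.sum_le_sum fun j _ => ?_
      rw [Finset.sum_comm, Finset.mul_sum]
      exact Finset.sum_le_sum fun k _ => hc j k
    have e2 : ∑ i, A i^2 = ∑ j, a j := by rw [sum_fin_succ_fun]
    rw [e2]
    calc _ ≤ 3 * 2^n * (3^m * NN m n * (∑ j, a j)^2) := by gcongr
      _ = _ := by simp only [NN]; ring

lemma khin (m n : ℕ) (A : (Fin m → Fin n) → ℝ) :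
    NN m n * √(∑ i, A i^2) ≤ 3^m * ∑ e : Fin m → Fin n → Bool, |ml A (fun l j => sg (e l j))| := by
  set s := √(∑ i, A i^2) with hs
  have hN : 0 < NN m n := by unfold NN; positivity
  have hss : ∑ i, A i^2 = s^2 := by
    rw [hs, Real.sq_sqrt]; exact Finset.sum_nonneg fun i _ => sq_nonneg _
  have hs0 : 0 ≤ s := Real.sqrt_nonneg _
  rcases hs0.eq_or_lt with h | h
  · rw [← h]; simp only [mul_zero]; positivity
  have h2 := ch2 m n A
  have h4 := ch4 m n A
  rw [hss] at h2 h4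
  have hK : (1:ℝ) ≤ 3^m := one_le_pow₀ (by norm_num)
  set K : ℝ := 3^m
  have pt : ∀ y : ℝ, 3 * (K*s)^2 * y^2 - y^4 ≤ 2 * (K*s)^3 * |y| := by
    intro y
    have hy := abs_nonneg y
    have hl : 0 < K * s := by positivity
    rw [← sq_abs y, show y^4 = |y|^4 by rw [show 4 = 2*2 from rfl, pow_mul, pow_mul, sq_abs]]
    set u := |y|
    set t := K * s
    have : 0 ≤ u * ((u - t)^2 * (u + 2*t)) := by positivity
    nlinarith
  have hsum := Finset.sum_le_sum (s := Finset.univ) fun (e : Fin m → Fin n → Bool) _ => pt (ml A (fun l j => sg (e l j)))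
  rw [Finset.sum_sub_distrib, ← Finset.mul_sum, ← Finset.mul_sum, h2] at hsum
  set T := ∑ e : Fin m → Fin n → Bool, |ml A (fun l j => sg (e l j))|
  have h5 : 3 * (K*s)^2 * (NN m n * s^2) - K * NN m n * (s^2)^2 ≤ 2 * (K*s)^3 * T := by linarith
  have h6 : K * NN m n * (s^2)^2 ≤ K^2 * NN m n * (s^2)^2 := by
    have : K ≤ K^2 := by nlinarith
    gcongr
  have h7 : (2 * K^2*s^3) * (NN m n * s) ≤ (2 * K^2*s^3) * (K * T) := by nlinarith
  exact le_of_mul_le_mul_left h7 (by positivity)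

lemma bsum {m n : ℕ} (A : (Fin m → Fin n) → ℝ) (M : ℝ)
    (hM : ∀ x : Fin m → Fin n → ℝ, (∀ l j, |x l j| ≤ 1) → |ml A x| ≤ M) (k : Fin m) :
    ∑ j, √(∑ i, (if i k = j then A i else 0)^2) ≤ 3^m * M := by
  have hN : 0 < NN m n := by unfold NN; positivity
  refine le_of_mul_le_mul_left ?_ hN
  rw [Finset.mul_sum]
  refine (Finset.sum_le_sum fun j _ => khin m n _).trans ?_
  rw [← Finset.mul_sum, Finset.sum_comm]
  have key : ∀ e : Fin m → Fin n → Bool,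
      ∑ j, |ml (fun i => if i k = j then A i else 0) (fun l j => sg (e l j))| ≤ M := by
    intro e
    set f : Fin n → ℝ := fun j => ml (fun i => if i k = j then A i else 0) (fun l j => sg (e l j)) with hf
    set t : Fin n → ℝ := fun j => if 0 ≤ f j then 1 else -1 with ht
    have h1 : ∀ j, |f j| = t j * f j := by
      intro j; simp only [ht]; split_ifs with h
      · rw [abs_of_nonneg h]; ring
      · rw [abs_of_neg (not_le.1 h)]; ring
    have h2 := hM (fun l j => if l = k then t j * sg (e l j) else sg (e l j)) (by
      intro l j
      have : |t j| = 1 := by simp only [ht]; split_ifs <;> simp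
      split_ifs <;> simp [abs_mul, sg_abs, this])
    refine le_trans (le_of_eq ?_) ((le_abs_self _).trans h2)
    calc ∑ j, |f j| = ∑ j, t j * f j := Finset.sum_congr rfl fun j _ => h1 j
      _ = _ := ?_
    simp only [hf, ml, Finset.mul_sum]
    rw [Finset.sum_comm]
    refine Finset.sum_congr rfl fun i _ => ?_
    rw [Finset.sum_eq_single (i k)]
    · have : ∀ l, (if l = k then t (i l) * sg (e l (i l)) else sg (e l (i l)))
        = (if l = k then t (i k) else 1) * sg (e l (i l)) := by
        intro l; split_ifs with h
        · rw [h]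
        · simp
      simp only [this, Finset.prod_mul_distrib, Finset.prod_ite_eq', Finset.mem_univ, if_true]
      ring
    · intro j _ hj; rw [if_neg (Ne.symm hj)]; ring
    · simp
  have := Finset.sum_le_sum (s := Finset.univ) fun e _ => key e
  simp only [Finset.sum_const, Finset.card_univ, Fintype.card_fun, Fintype.card_bool, Fintype.card_fin, nsmul_eq_mul] at this
  push_cast at this
  have : _ ≤ NN m n * M := this
  nlinarith [show (0:ℝ) < 3^m by positivity]

lemma blei {m n : ℕ} (hm : 0 < m) (A : (Fin m → Fin n) → ℝ)
    (hb : ∀ k, ∑ j, √(∑ i, (if i k = j then A i else 0)^2) ≤ 1) :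
    ∑ i, |A i| ^ ((2 * m / (m+1) : ℝ)) ≤ 1 := by
  set b : Fin m → Fin n → ℝ := fun k j => √(∑ i, (if i k = j then A i else 0)^2) with hbd
  have hb0 : ∀ k j, 0 ≤ b k j := fun k j => Real.sqrt_nonneg _
  have hbs : ∀ k j, b k j^2 = ∑ i, (if i k = j then A i else 0)^2 := fun k j => by
    rw [hbd]; exact Real.sq_sqrt (Finset.sum_nonneg fun i _ => sq_nonneg _)
  have hm' : (0:ℝ) < m := by exact_mod_cast hm
  have pt : ∀ i, |A i| ^ ((2 * m / (m+1) : ℝ)) ≤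
      (1/(m+1) : ℝ) * (∏ k, b k (i k) + ∑ k, A i^2 / b k (i k)) := by
    intro i
    by_cases hA : A i = 0
    · rw [hA, abs_zero, Real.zero_rpow (by positivity)]
      have : 0 ≤ ∏ k, b k (i k) := Finset.prod_nonneg fun k _ => hb0 _ _
      simp; positivity
    have hpos : ∀ k, 0 < b k (i k) := by
      intro k
      have h1 : A i^2 ≤ b k (i k)^2 := by
        rw [hbs]
        have := Finset.single_le_sum (f := fun i' => (if i' k = i k then A i' else 0)^2)
          (fun i _ => sq_nonneg _) (Finset.mem_univ i)
        simpa using this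
      have : 0 < A i^2 := by positivity
      exact lt_of_le_of_ne (hb0 _ _) fun h => by rw [← h] at h1; simp at h1; exact hA h1
    set z : Fin (m+1) → ℝ := Fin.cons (∏ k, b k (i k)) (fun k => A i^2 / b k (i k)) with hz
    have hz0 : ∀ k, 0 ≤ z k := by
      intro k
      refine Fin.cases ?_ (fun k => ?_) k
      · simp only [hz, Fin.cons_zero]; exact Finset.prod_nonneg fun k _ => hb0 _ _
      · simp only [hz, Fin.cons_succ]; have := hpos k; positivity
    have := Real.geom_mean_le_arith_mean_weighted Finset.univ (fun _ : Fin (m+1) => (1/(m+1) : ℝ)) z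
      (fun _ _ => by positivity) (by simp; field_simp) (fun k _ => hz0 k)
    rw [Real.finsetProd_rpow _ _ (fun k _ => hz0 k), ← Finset.mul_sum, Fin.sum_univ_succ, Fin.prod_univ_succ] at this
    simp only [hz, Fin.cons_zero, Fin.cons_succ] at this
    refine le_trans (le_of_eq ?_) this
    rw [Finset.prod_div_distrib, mul_div_cancel₀]
    · rw [Finset.prod_const, Finset.card_univ, Fintype.card_fin, ← sq_abs, ← pow_mul]
      rw [← Real.rpow_natCast, ← Real.rpow_mul (abs_nonneg _)]
      congr 1
      push_cast; ring
    · exact (Finset.prod_pos fun k _ => hpos k).ne'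
  refine (Finset.sum_le_sum fun i _ => pt i).trans ?_
  rw [← Finset.mul_sum, Finset.sum_add_distrib]
  have h1 : ∑ i : Fin m → Fin n, ∏ k, b k (i k) ≤ 1 := by
    have := Finset.prod_univ_sum (fun _ : Fin m => (Finset.univ : Finset (Fin n))) (fun k j => b k j)
    rw [Fintype.piFinset_univ] at this
    rw [← this]
    exact Finset.prod_le_one (fun k _ => Finset.sum_nonneg fun j _ => hb0 k j) fun k _ => hb k
  have h2 : ∑ i : Fin m → Fin n, ∑ k, A i^2 / b k (i k) ≤ m := by
    rw [Finset.sum_comm]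
    have : ∀ k, ∑ i : Fin m → Fin n, A i^2 / b k (i k) ≤ 1 := by
      intro k
      refine le_trans (le_of_eq ?_) (hb k)
      rw [← Finset.sum_fiberwise Finset.univ (fun i => i k)]
      refine Finset.sum_congr rfl fun j _ => ?_
      have : ∑ i with i k = j, A i^2 / b k (i k) = (b k j^2) / b k j := by
        rw [hbs, Finset.sum_div, Finset.sum_filter]
        refine Finset.sum_congr rfl fun i _ => ?_
        split_ifs with h
        · rw [h]
        · simp
      rw [this]
      by_cases h : b k j = 0
      · rw [h, div_zero]; exact h.symm
      · rw [sq, mul_div_assoc, div_self h, mul_one]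
    refine (Finset.sum_le_sum fun k _ => this k).trans (by simp)
  rw [one_div, inv_mul_le_iff₀ (by positivity)]
  linarith

lemma exists_listing {n : ℕ} (m : ℕ) (α : Fin n →₀ ℕ) (h : α.degree = m) :
    ∃ c : Fin m → Fin n, α = ∑ j, Finsupp.single (c j) 1 := by
  induction m generalizing α with
  | zero => exact ⟨Fin.elim0, by simpa using (Finsupp.degree_eq_zero_iff α).1 h⟩
  | succ m ih =>
    have hne : α ≠ 0 := by rintro rfl; simp at h
    obtain ⟨i, hi⟩ := Finsupp.ne_iff.1 hne
    have hle : Finsupp.single i 1 ≤ α := by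
      rw [Finsupp.single_le_iff]; exact Nat.one_le_iff_ne_zero.2 hi
    have he : Finsupp.single i 1 + (α - Finsupp.single i 1) = α := add_tsub_cancel_of_le hle
    have hd : (α - Finsupp.single i 1).degree = m := by
      have := congrArg Finsupp.degree he
      rw [map_add, h, Finsupp.degree_single] at this
      omega
    obtain ⟨c, hc⟩ := ih _ hd
    refine ⟨Fin.cons i c, ?_⟩
    rw [Fin.sum_univ_succ]
    simp only [Fin.cons_zero, Fin.cons_succ]
    rw [← hc, he]

lemma prod_pow_listing {n m : ℕ} (c : Fin m → Fin n) (x : Fin n → ℝ) :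
    ∏ i, x i ^ ((∑ j, Finsupp.single (c j) 1 : Fin n →₀ ℕ) i) = ∏ j, x (c j) := by
  simp only [Finsupp.finsetSum_apply, ← Finset.prod_pow_eq_pow_sum]
  rw [Finset.prod_comm]
  refine Finset.prod_congr rfl fun j _ => ?_
  rw [Finset.prod_eq_single (c j)]
  · simp
  · intro b _ hb; simp [Finsupp.single_apply, Ne.symm hb]
  · simp

lemma Wsum {m : ℕ} (φ : Fin m → Fin m) :
    ∑ e : Fin m → Bool, (∏ k, sg (e k)) * ∏ j, sg (e (φ j))
      = if Function.Bijective φ then 2^m else 0 := by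
  split_ifs with h
  · have : ∀ e : Fin m → Bool, (∏ k, sg (e k)) * ∏ j, sg (e (φ j)) = 1 := by
      intro e
      rw [h.prod_comp (fun k => sg (e k)), ← Finset.prod_mul_distrib]
      refine Finset.prod_eq_one fun k _ => ?_
      cases e k <;> simp [sg]
    simp [this]
  · have hs : ¬ Function.Surjective φ := fun hs => h (Finite.injective_iff_surjective.2 hs |> fun hi => ⟨hi, hs⟩)
    obtain ⟨k0, hk0⟩ := not_forall.1 hs
    set d : Fin m → ℕ := fun k => (Finset.univ.filter fun j => φ j = k).card with hd
    have : ∀ e : Fin m → Bool, (∏ k, sg (e k)) * ∏ j, sg (e (φ j)) = ∏ k, (sg (e k) * sg (e k)^d k) := by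
      intro e
      rw [Finset.prod_mul_distrib, ← Finset.prod_fiberwise Finset.univ φ (fun j => sg (e (φ j)))]
      congr 1
      refine Finset.prod_congr rfl fun k _ => ?_
      rw [hd, ← Finset.prod_const]
      refine Finset.prod_congr rfl fun j hj => ?_
      rw [(Finset.mem_filter.1 hj).2]
    simp only [this]
    have h2 := Finset.prod_univ_sum (fun _ : Fin m => (Finset.univ : Finset Bool)) (fun k b => sg b * sg b^d k)
    rw [Fintype.piFinset_univ] at h2
    rw [← h2]
    refine Finset.prod_eq_zero (Finset.mem_univ k0) ?_
    have : d k0 = 0 := by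
      rw [hd]; simp only [Finset.card_eq_zero, Finset.filter_eq_empty_iff]
      intro j _ hj; exact hk0 ⟨j, hj⟩
    simp [this, sg]

lemma polar {m n : ℕ} (c : Fin m → Fin n) (x : Fin m → Fin n → ℝ) :
    ∑ e : Fin m → Bool, (∏ k, sg (e k)) * ∏ j, (∑ k, sg (e k) * x k (c j))
      = 2^m * ∑ s : Equiv.Perm (Fin m), ∏ j, x (s j) (c j) := by
  have h1 : ∀ e : Fin m → Bool, ∏ j, (∑ k, sg (e k) * x k (c j))
      = ∑ φ : Fin m → Fin m, (∏ j, sg (e (φ j))) * ∏ j, x (φ j) (c j) := by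
    intro e
    have h2 := Finset.prod_univ_sum (fun _ : Fin m => (Finset.univ : Finset (Fin m))) (fun j k => sg (e k) * x k (c j))
    rw [Fintype.piFinset_univ] at h2
    rw [h2]
    simp only [Finset.prod_mul_distrib]
  simp only [h1, Finset.mul_sum]
  rw [Finset.sum_comm]
  have h3 : ∀ φ : Fin m → Fin m, ∑ e : Fin m → Bool, (∏ k, sg (e k)) * ((∏ j, sg (e (φ j))) * ∏ j, x (φ j) (c j))
      = (if Function.Bijective φ then 2^m else 0) * ∏ j, x (φ j) (c j) := by
    intro φ
    rw [← Wsum, Finset.sum_mul]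
    exact Finset.sum_congr rfl fun e _ => by ring
  simp only [h3]
  symm
  refine Finset.sum_of_injOn (fun s : Equiv.Perm (Fin m) => (s : Fin m → Fin m)) ?_ ?_ ?_ ?_
  · intro a _ b _ hab; exact DFunLike.coe_injective hab
  · intro a _; simp
  · intro φ _ hφ
    rw [if_neg, zero_mul]
    intro hb
    exact hφ ⟨Equiv.ofBijective φ hb, by simp, rfl⟩
  · intro s _
    rw [if_pos s.bijective]

lemma supNorm_bdd {n : ℕ} (P : MvPolynomial (Fin n) ℝ) :
    BddAbove {y : ℝ | ∃ x : Fin n → ℝ, (∀ i, |x i| ≤ 1) ∧ y = |eval x P|} := by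
  refine ⟨∑ α ∈ P.support, |coeff α P|, ?_⟩
  rintro y ⟨x, hx, rfl⟩
  rw [eval_eq']
  refine (Finset.abs_sum_le_sum_abs _ _).trans (Finset.sum_le_sum fun α _ => ?_)
  rw [abs_mul, Finset.abs_prod]
  refine mul_le_of_le_one_right (abs_nonneg _) (Finset.prod_le_one (fun i _ => abs_nonneg _) fun i _ => ?_)
  rw [abs_pow]; exact pow_le_one₀ (abs_nonneg _) (hx i)

lemma le_supNorm {n : ℕ} (P : MvPolynomial (Fin n) ℝ) (x : Fin n → ℝ) (hx : ∀ i, |x i| ≤ 1) :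
    |eval x P| ≤ supNorm P := le_csSup (supNorm_bdd P) ⟨x, hx, rfl⟩

lemma exists_ml {n m : ℕ} (hm : 0 < m) (hn : n ≠ 0) (P : MvPolynomial (Fin n) ℝ) (hP : P.IsHomogeneous m) :
    ∃ (A : (Fin m → Fin n) → ℝ) (c : (Fin n →₀ ℕ) → Fin m → Fin n),
      Set.InjOn c P.support ∧ (∀ α ∈ P.support, |coeff α P| ≤ |A (c α)|) ∧
      ∀ x : Fin m → Fin n → ℝ, (∀ l j, |x l j| ≤ 1) → |ml A x| ≤ m^m * supNorm P := by
  classical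
  have hex : ∀ α : Fin n →₀ ℕ, ∃ c : Fin m → Fin n, α ∈ P.support → α = ∑ j, Finsupp.single (c j) 1 := by
    intro α
    by_cases h : α ∈ P.support
    · obtain ⟨c, hc⟩ := exists_listing m α (by
        by_contra hd
        exact (mem_support_iff.1 h) (hP.coeff_eq_zero hd))
      exact ⟨c, fun _ => hc⟩
    · exact ⟨fun _ => ⟨0, Nat.pos_of_ne_zero hn⟩, fun h' => absurd h' h⟩
  choose c hc using hex
  have hev : ∀ x : Fin n → ℝ, eval x P = ∑ α ∈ P.support, coeff α P * ∏ j, x (c α j) := by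
    intro x
    rw [eval_eq']
    refine Finset.sum_congr rfl fun α hα => ?_
    rw [← prod_pow_listing, ← hc α hα]
  set A : (Fin m → Fin n) → ℝ := fun i => ∑ α ∈ P.support, coeff α P *
    ∑ s : Equiv.Perm (Fin m), if i = c α ∘ s then 1 else 0 with hA
  refine ⟨A, c, ?_, ?_, ?_⟩
  · intro α hα β hβ h
    rw [hc α hα, hc β hβ, h]
  · intro α hα
    have : A (c α) = coeff α P * ∑ s : Equiv.Perm (Fin m), if c α = c α ∘ s then 1 else 0 := by
      simp only [hA]
      refine Finset.sum_eq_single_of_mem α hα fun β hβ hne => ?_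
      rw [Finset.sum_eq_zero, mul_zero]
      intro s _
      rw [if_neg]
      intro h
      apply hne
      rw [hc α hα, hc β hβ, h]
      exact (Equiv.sum_comp s (fun j => (Finsupp.single (c β j) 1 : Fin n →₀ ℕ))).symm
    rw [this, abs_mul]
    refine le_mul_of_one_le_right (abs_nonneg _) (le_trans ?_ (le_abs_self _))
    have := Finset.single_le_sum (f := fun s : Equiv.Perm (Fin m) => if c α = c α ∘ s then (1:ℝ) else 0)
      (fun s _ => by split_ifs <;> norm_num) (Finset.mem_univ 1)
    simpa using this
  · intro x hx
    have hml : ml A x = ∑ α ∈ P.support, coeff α P * ∑ s : Equiv.Perm (Fin m), ∏ j, x (s j) (c α j) := by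
      simp only [ml, hA, Finset.sum_mul, Finset.mul_sum]
      rw [Finset.sum_comm]
      refine Finset.sum_congr rfl fun α _ => ?_
      rw [Finset.sum_comm, ← Equiv.sum_comp (Equiv.inv (Equiv.Perm (Fin m)))]
      refine Finset.sum_congr rfl fun s _ => ?_
      rw [Finset.sum_eq_single (c α ∘ (s⁻¹ : Equiv.Perm (Fin m)))]
      · simp only [Equiv.inv_apply, if_true, mul_one]
        congr 1
        rw [← Equiv.prod_comp s]
        simp
      · intro i _ hi
        rw [if_neg (by exact hi)]; ring
      · simp
    have hpol : 2^m * ml A x = ∑ e : Fin m → Bool, (∏ k, sg (e k)) * eval (fun i => ∑ k, sg (e k) * x k i) P := by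
      simp only [hev, Finset.mul_sum]
      rw [Finset.sum_comm, hml, Finset.mul_sum]
      refine Finset.sum_congr rfl fun α _ => ?_
      rw [mul_left_comm, ← polar, Finset.mul_sum]
      exact Finset.sum_congr rfl fun e _ => by ring
    have hb : ∀ e : Fin m → Bool, |eval (fun i => ∑ k, sg (e k) * x k i) P| ≤ m^m * supNorm P := by
      intro e
      have hm' : (0:ℝ) < m := by exact_mod_cast hm
      have h1 := le_supNorm P (fun i => (∑ k, sg (e k) * x k i) / m) (by
        intro i
        rw [abs_div, div_le_one (by positivity), abs_of_pos hm']
        refine (Finset.abs_sum_le_sum_abs _ _).trans ?_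
        refine (Finset.sum_le_sum (g := fun _ => (1:ℝ)) fun k _ => ?_).trans (by simp)
        rw [abs_mul, sg_abs, one_mul]; exact hx k i)
      have h2 : eval (fun i => ∑ k, sg (e k) * x k i) P = m^m * eval (fun i => (∑ k, sg (e k) * x k i) / m) P := by
        simp only [hev, Finset.mul_sum]
        refine Finset.sum_congr rfl fun α _ => ?_
        rw [Finset.prod_div_distrib]
        simp only [Finset.prod_const, Finset.card_univ, Fintype.card_fin]
        field_simp
      rw [h2, abs_mul, abs_of_nonneg (by positivity)]
      gcongr
    have h4 : |2^m * ml A x| ≤ 2^m * (m^m * supNorm P) := by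
      rw [hpol]
      refine (Finset.abs_sum_le_sum_abs _ _).trans ?_
      refine (Finset.sum_le_sum (g := fun _ => (m^m * supNorm P)) fun e _ => ?_).trans (by simp)
      rw [abs_mul, Finset.abs_prod]
      simp only [sg_abs, Finset.prod_const_one, one_mul]
      exact hb e
    rw [abs_mul, abs_of_pos (by positivity)] at h4
    exact le_of_mul_le_mul_left h4 (by positivity)

lemma supNorm_nonneg {n : ℕ} (P : MvPolynomial (Fin n) ℝ) : 0 ≤ supNorm P :=
  Real.sSup_nonneg (by rintro y ⟨x, _, rfl⟩; exact abs_nonneg _)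

lemma BH {m n : ℕ} (hm : 0 < m) (P : MvPolynomial (Fin n) ℝ) (hP : P.IsHomogeneous m) :
    lpNorm (2 * m / (m + 1)) P ≤ (3^m * m^m) * supNorm P := by
  have hm' : (0:ℝ) < m := by exact_mod_cast hm
  by_cases hn : n = 0
  · subst hn
    have hP0 : P = 0 := by
      ext α
      rw [coeff_zero]
      refine hP.coeff_eq_zero ?_
      rw [Subsingleton.elim α 0]; simp; omega
    subst hP0
    have : (1 / (2 * m / (m + 1)) : ℝ) ≠ 0 := by positivity
    have h0 : lpNorm (2 * m / (m + 1)) (0 : MvPolynomial (Fin 0) ℝ) = 0 := by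
      unfold lpNorm
      rw [support_zero, Finset.sum_empty, Real.zero_rpow this]
    rw [h0]
    exact mul_nonneg (by positivity) (supNorm_nonneg _)
  obtain ⟨A, c, hinj, hle, hml⟩ := exists_ml hm hn P hP
  set p : ℝ := 2 * m / (m + 1) with hp
  have hp0 : 0 < p := by positivity
  refine le_of_forall_gt_imp_ge_of_dense fun T hT => ?_
  have hT0 : 0 < T := lt_of_le_of_lt (mul_nonneg (by positivity) (supNorm_nonneg P)) hT
  have hb : ∀ k, ∑ j, √(∑ i, (if i k = j then A i / T else 0)^2) ≤ 1 := by
    intro k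
    refine (bsum (fun i => A i / T) (m^m * supNorm P / T) ?_ k).trans ?_
    · intro x hx
      have : ml (fun i => A i / T) x = ml A x / T := by
        simp only [ml, Finset.sum_div]
        exact Finset.sum_congr rfl fun i _ => by ring
      rw [this, abs_div, abs_of_pos hT0]
      gcongr
      exact hml x hx
    · rw [← mul_div_assoc, div_le_one hT0, ← mul_assoc]; exact hT.le
  have hB := blei hm (fun i => A i / T) hb
  have h1 : ∑ α ∈ P.support, |coeff α P|^p ≤ T^p := by
    calc _ ≤ ∑ α ∈ P.support, |A (c α)|^p := Finset.sum_le_sum fun α hα =>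
            Real.rpow_le_rpow (abs_nonneg _) (hle α hα) hp0.le
      _ = ∑ i ∈ P.support.image c, |A i|^p := by rw [Finset.sum_image hinj]
      _ ≤ ∑ i, |A i|^p := Finset.sum_le_univ_sum_of_nonneg fun i => by positivity
      _ = (∑ i, |A i / T|^p) * T^p := by
            rw [Finset.sum_mul]
            refine Finset.sum_congr rfl fun i _ => ?_
            rw [← Real.mul_rpow (abs_nonneg _) hT0.le, abs_div, abs_of_pos hT0, div_mul_cancel₀ _ hT0.ne']
      _ ≤ 1 * T^p := by gcongr
      _ = _ := one_mul _
  unfold lpNorm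
  calc _ ≤ (T^p)^(1/p) := Real.rpow_le_rpow (Finset.sum_nonneg fun i _ => by positivity) h1 (by positivity)
    _ = T := by rw [← Real.rpow_mul hT0.le, mul_one_div_cancel hp0.ne', Real.rpow_one]

/-- exponent of the t-th monomial in the j-th factor -/
noncomputable def mu {r : ℕ} (j : Fin r) (t : Fin 3) : Fin (r * 2) →₀ ℕ :=
  Finsupp.single (finProdFinEquiv (j, 0)) (![2, 0, 1] t) +
    Finsupp.single (finProdFinEquiv (j, 1)) (![0, 2, 1] t)

/-- signs -/
def ss (t : Fin 3) : ℝ := ![1, -1, 1] t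

/-- The extremal polynomial -/
noncomputable def RR (r : ℕ) : MvPolynomial (Fin (r * 2)) ℝ :=
  ∏ j : Fin r, ∑ t : Fin 3, monomial (mu j t) (ss t)

lemma RR_hom (r : ℕ) : (RR r).IsHomogeneous (r * 2) := by
  have := IsHomogeneous.prod (Finset.univ) (fun j : Fin r => ∑ t : Fin 3, monomial (mu j t) (ss t)) (fun _ => 2)
    (fun j _ => IsHomogeneous.sum _ _ _ fun t _ => isHomogeneous_monomial _ (by
      rw [mu, map_add, Finsupp.degree_single, Finsupp.degree_single]
      fin_cases t <;> simp))
  simpa [RR] using this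

lemma RR_eq (r : ℕ) : RR r = ∑ φ : Fin r → Fin 3, monomial (∑ j, mu j (φ j)) (∏ j, ss (φ j)) := by
  unfold RR
  have h2 := Finset.prod_univ_sum (fun _ : Fin r => (Finset.univ : Finset (Fin 3)))
    (fun j t => (monomial (mu j t) (ss t) : MvPolynomial (Fin (r * 2)) ℝ))
  rw [Fintype.piFinset_univ] at h2
  rw [h2]
  refine Finset.sum_congr rfl fun φ _ => ?_
  exact (monomial_sum_prod _ _ _).symm

lemma mu_inj (r : ℕ) : Function.Injective (fun φ : Fin r → Fin 3 => ∑ j, mu j (φ j)) := by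
  have key : ∀ (φ : Fin r → Fin 3) (j : Fin r), (∑ j, mu j (φ j)) (finProdFinEquiv (j, 0)) = ![2, 0, 1] (φ j) := by
    intro φ j
    rw [Finsupp.finsetSum_apply, Finset.sum_eq_single j]
    · simp [mu]
    · intro b _ hb
      simp [mu, Finsupp.single_apply, hb]
    · simp
  intro φ ψ h
  funext j
  have h1 := key φ j
  have h2 := key ψ j
  dsimp only at h
  rw [h, h2] at h1
  revert h1
  generalize φ j = a
  generalize ψ j = b
  revert a b
  decide

lemma RR_coeff (r : ℕ) (φ : Fin r → Fin 3) : |coeff (∑ j, mu j (φ j)) (RR r)| = 1 := by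
  classical
  rw [RR_eq, coeff_sum, Finset.sum_eq_single φ]
  · rw [coeff_monomial, if_pos rfl, Finset.abs_prod]
    refine Finset.prod_eq_one fun j _ => ?_
    generalize φ j = a
    fin_cases a <;> simp [ss]
  · intro ψ _ h
    rw [coeff_monomial, if_neg fun h' => h (mu_inj r h')]
  · simp

lemma RR_lp (r : ℕ) (p : ℝ) (hp : 0 < p) : ((3:ℝ)^r)^(1/p) ≤ lpNorm p (RR r) := by
  classical
  unfold lpNorm
  refine Real.rpow_le_rpow (by positivity) ?_ (by positivity)
  calc (3:ℝ)^r = ∑ φ : Fin r → Fin 3, |coeff (∑ j, mu j (φ j)) (RR r)|^p := by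
        simp [RR_coeff]
    _ = ∑ α ∈ Finset.univ.image (fun φ : Fin r → Fin 3 => ∑ j, mu j (φ j)), |coeff α (RR r)|^p :=
        by rw [Finset.sum_image (mu_inj r).injOn]
    _ ≤ _ := by
        refine Finset.sum_le_sum_of_subset_of_nonneg ?_ fun _ _ _ => by positivity
        intro α hα
        obtain ⟨φ, _, rfl⟩ := Finset.mem_image.1 hα
        rw [mem_support_iff]
        intro h
        have := RR_coeff r φ
        rw [h] at this
        simp at this

lemma RR_sup (r : ℕ) : supNorm (RR r) ≤ (5/4)^r := by
  refine Real.sSup_le ?_ (by positivity)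
  rintro y ⟨x, hx, rfl⟩
  rw [RR, map_prod, Finset.abs_prod]
  calc _ ≤ ∏ j : Fin r, (5/4 : ℝ) := Finset.prod_le_prod (fun _ _ => abs_nonneg _) fun j _ => ?_
    _ = _ := by rw [Finset.prod_const, Finset.card_univ, Fintype.card_fin]
  have : eval x (∑ t : Fin 3, monomial (mu j t) (ss t)) = x (finProdFinEquiv (j, 0))^2
      - x (finProdFinEquiv (j, 1))^2 + x (finProdFinEquiv (j, 0)) * x (finProdFinEquiv (j, 1)) := by
    have hmu : ∀ t a, (monomial (mu j t) a : MvPolynomial (Fin (r*2)) ℝ) =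
      C a * (X (finProdFinEquiv (j, 0)))^(![2, 0, 1] t : ℕ) * (X (finProdFinEquiv (j, 1)))^(![0, 2, 1] t : ℕ) := by
      intro t a
      rw [mu, X_pow_eq_monomial, X_pow_eq_monomial, C_mul_monomial, monomial_mul]; simp
    simp only [hmu, Fin.sum_univ_three, ss]
    simp
    ring
  rw [this]
  have h0 := hx (finProdFinEquiv (j, 0))
  have h1 := hx (finProdFinEquiv (j, 1))
  generalize x (finProdFinEquiv (j, 0)) = a at *
  generalize x (finProdFinEquiv (j, 1)) = b at *
  have ha : a^2 ≤ 1 := by rw [← sq_abs]; exact pow_le_one₀ (abs_nonneg _) h0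
  have hb : b^2 ≤ 1 := by rw [← sq_abs]; exact pow_le_one₀ (abs_nonneg _) h1
  rw [abs_le]
  constructor <;> nlinarith [sq_nonneg (b - a/2), sq_nonneg (a + b/2)]

/-- For every even positive integer `m`,
`D_{ℝ,m} ≥ (3^{m/2})^{(m+1)/(2m)} / (5/4)^{m/2}`. -/
theorem real_BH_lower_even (m : ℕ) (hm : 0 < m) (hme : Even m) :
    ((3 : ℝ) ^ (m / 2)) ^ (((m : ℝ) + 1) / (2 * m)) / (5 / 4 : ℝ) ^ (m / 2) ≤ BHconst m := by
  unfold BHconst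
  have hm' : (0:ℝ) < m := by exact_mod_cast hm
  refine le_csInf ⟨3^m * m^m, by positivity, fun n P hP => BH hm P hP⟩ ?_
  rintro D ⟨hD, h⟩
  have hr : m / 2 * 2 = m := Nat.div_mul_cancel hme.two_dvd
  have h1 := h _ (RR (m/2)) (hr.subst (motive := fun k => (RR (m/2)).IsHomogeneous k) (RR_hom (m/2)))
  have h2 := RR_lp (m/2) (2 * m / (m + 1)) (by positivity)
  rw [one_div_div] at h2
  rw [div_le_iff₀ (by positivity)]
  exact (h2.trans h1).trans (mul_le_mul_of_nonneg_left (RR_sup _) hD.le)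
end

section
/- For every fixed n ∈ ℕ, the sequence D_m = C(m+n−1, n−1)^{1/(2m)} tends to 1 as m → ∞, and satisfies |P|_{2m/(m+1)} ≤ D_m ‖P‖ for every m-homogeneous polynomial P in n complex variables; hence the complex polynomial Bohnenblust–Hille inequality in fixed dimension n is contractive, i.e., there exist constants D_m with lim_{m→∞} D_m = 1 such that |P|_{2m/(m+1)} ≤ D_m‖P‖ for all such P. -/
open MvPolynomial Filter

/-- The sup norm of a complex polynomial in `n` variables over the closed polydisk `𝔻^n`. -/
noncomputable def supNormC {n : ℕ} (P : MvPolynomial (Fin n) ℂ) : ℝ :=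
  sSup {y : ℝ | ∃ z : Fin n → ℂ, (∀ i, ‖z i‖ ≤ 1) ∧ y = ‖eval z P‖}

/-- The `ℓ_p` norm of the coefficients of a complex polynomial. -/
noncomputable def lpNormC {n : ℕ} (p : ℝ) (P : MvPolynomial (Fin n) ℂ) : ℝ :=
  (∑ α ∈ P.support, ‖coeff α P‖ ^ p) ^ (1 / p)

noncomputable section BHaux

open MeasureTheory

local instance bhMS : MeasureSpace UnitAddCircle := ⟨AddCircle.haarAddCircle⟩

local instance bhProb : IsProbabilityMeasure (volume : Measure UnitAddCircle) :=
  inferInstanceAs (IsProbabilityMeasure AddCircle.haarAddCircle)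

theorem bh_orth (n : ℕ) : Orthonormal ℂ (fun k : Fin n → ℤ =>
    (ContinuousMap.toLp (E := ℂ) 2 (volume : Measure (UnitAddTorus (Fin n))) ℂ
      (UnitAddTorus.mFourier k))) :=
  UnitAddTorus.orthonormal_mFourier (d := Fin n)

theorem bh_bdd {n : ℕ} (P : MvPolynomial (Fin n) ℂ) :
    BddAbove {y : ℝ | ∃ z : Fin n → ℂ, (∀ i, ‖z i‖ ≤ 1) ∧ y = ‖eval z P‖} := by
  refine ⟨∑ α ∈ P.support, ‖coeff α P‖, ?_⟩
  rintro y ⟨z, hz, rfl⟩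
  rw [eval_eq']
  refine (norm_sum_le _ _).trans (Finset.sum_le_sum fun α _ => ?_)
  rw [norm_mul, norm_prod]
  refine mul_le_of_le_one_right (norm_nonneg _) ?_
  refine Finset.prod_le_one (fun i _ => norm_nonneg _) fun i _ => ?_
  rw [norm_pow]
  exact pow_le_one₀ (norm_nonneg _) (hz i)

theorem bh_eval_le {n : ℕ} (P : MvPolynomial (Fin n) ℂ) (z : Fin n → ℂ) (hz : ∀ i, ‖z i‖ ≤ 1) :
    ‖eval z P‖ ≤ supNormC P := le_csSup (bh_bdd P) ⟨z, hz, rfl⟩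

theorem bh_nonneg {n : ℕ} (P : MvPolynomial (Fin n) ℂ) : 0 ≤ supNormC P :=
  (norm_nonneg _).trans (bh_eval_le P 0 (by simp))

theorem bh_parseval {n : ℕ} (P : MvPolynomial (Fin n) ℂ) :
    ∑ α ∈ P.support, ‖coeff α P‖ ^ 2 ≤ supNormC P ^ 2 := by
  let e : (Fin n →₀ ℕ) → (Fin n → ℤ) := fun α i => (α i : ℤ)
  have he : Function.Injective e := by
    intro a b h
    ext i
    have := congrFun h i
    simpa [e] using this
  have ho := (bh_orth n).comp e he
  let f : C(UnitAddTorus (Fin n), ℂ) :=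
    ∑ α ∈ P.support, coeff α P • UnitAddTorus.mFourier (e α)
  let F := ContinuousMap.toLp (E := ℂ) 2 (volume : Measure (UnitAddTorus (Fin n))) ℂ f
  have hf : ‖f‖ ≤ supNormC P := by
    rw [ContinuousMap.norm_le _ (bh_nonneg P)]
    intro x
    have : f x = eval (fun i => (fourier 1 (x i) : ℂ)) P := by
      rw [eval_eq']
      simp only [f, ContinuousMap.coe_sum, Finset.sum_apply, ContinuousMap.coe_smul,
        Pi.smul_apply, smul_eq_mul]
      refine Finset.sum_congr rfl fun α _ => ?_
      congr 1
      simp only [UnitAddTorus.mFourier, ContinuousMap.coe_mk, e]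
      refine Finset.prod_congr rfl fun i _ => ?_
      simp [fourier_apply, AddCircle.toCircle_nsmul]
    rw [this]
    exact bh_eval_le P _ (fun i => by rw [fourier_apply]; exact (Circle.norm_coe _).le)
  have hF : ‖F‖ ≤ ‖f‖ := by
    have h1 := ContinuousMap.toLp_norm_le (p := 2) (E := ℂ) (𝕜 := ℂ)
      (μ := (volume : Measure (UnitAddTorus (Fin n))))
    refine (ContinuousLinearMap.le_opNorm _ _).trans ?_
    refine mul_le_of_le_one_left (norm_nonneg _) (h1.trans ?_)
    simp [measureUnivNNReal]
  have hFs : F = ∑ α ∈ P.support, coeff α P •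
      ((fun k : Fin n → ℤ =>
    (ContinuousMap.toLp (E := ℂ) 2 (volume : Measure (UnitAddTorus (Fin n))) ℂ
      (UnitAddTorus.mFourier k))) ∘ e) α := by
    simp only [F, f, map_sum, map_smul, Function.comp]
  have h2 : ((∑ α ∈ P.support, ‖coeff α P‖ ^ 2 : ℝ) : ℂ) = ((‖F‖ ^ 2 : ℝ) : ℂ) := by
    have h3 := ho.inner_sum (fun α => coeff α P) (fun α => coeff α P) P.support
    rw [← hFs, inner_self_eq_norm_sq_to_K] at h3
    push_cast
    refine Eq.trans ?_ h3.symm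
    refine Finset.sum_congr rfl fun α _ => ?_
    rw [Complex.conj_mul']
  rw [Complex.ofReal_inj.mp h2]
  exact pow_le_pow_left₀ (norm_nonneg _) (hF.trans hf) 2

theorem bh_card {n m : ℕ} (hm : 0 < m) (P : MvPolynomial (Fin n) ℂ) (hP : P.IsHomogeneous m) :
    P.support.card ≤ Nat.choose (m + n - 1) (n - 1) := by
  classical
  have hsub : P.support ⊆ (Finset.univ : Finset (Fin n)).finsuppAntidiag m := by
    intro α hα
    have := hP (mem_support_iff.mp hα)
    rw [Finset.mem_finsuppAntidiag]
    refine ⟨?_, Finset.subset_univ _⟩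
    rw [← this]
    simp [Finsupp.weight_apply, Finsupp.sum_fintype]
  refine (Finset.card_le_card hsub).trans ?_
  rw [Finset.card_finsuppAntidiag_nat_eq_choose, Finset.card_univ, Fintype.card_fin]
  rcases Nat.eq_zero_or_pos n with rfl | hn
  · rw [Nat.choose_eq_zero_of_lt (by omega)]; exact Nat.zero_le _
  · rw [Nat.choose_symm_of_eq_add (show n + m - 1 = m + (n - 1) by omega), add_comm n m]

theorem bh_main {n m : ℕ} (hm : 0 < m) (P : MvPolynomial (Fin n) ℂ) (hP : P.IsHomogeneous m) :
    lpNormC (2 * m / (m + 1)) P ≤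
        (Nat.choose (m + n - 1) (n - 1) : ℝ) ^ (1 / (2 * (m : ℝ))) * supNormC P := by
  have hm' : (0 : ℝ) < m := by exact_mod_cast hm
  unfold lpNormC
  set p : ℝ := 2 * m / (m + 1) with hp
  have hp0 : 0 < p := by positivity
  have hq : 1 / p * 2 = 1 + 1 / m := by rw [hp]; field_simp
  set S := ∑ α ∈ P.support, ‖coeff α P‖ ^ p with hS
  have hS0 : 0 ≤ S := Finset.sum_nonneg fun _ _ => by positivity
  have h1 := Real.rpow_sum_le_const_mul_sum_rpow_of_nonneg P.support
    (f := fun α => ‖coeff α P‖ ^ p) (p := 1 / p * 2)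
    (by rw [hq]; have : 0 < 1 / (m : ℝ) := by positivity
        linarith) (fun _ _ => by positivity)
  have h2 : ∑ α ∈ P.support, (‖coeff α P‖ ^ p) ^ (1 / p * 2)
      = ∑ α ∈ P.support, ‖coeff α P‖ ^ 2 := by
    refine Finset.sum_congr rfl fun α _ => ?_
    rw [← Real.rpow_mul (norm_nonneg _), ← mul_assoc, mul_one_div_cancel hp0.ne', one_mul]
    exact Real.rpow_two _
  rw [h2] at h1
  refine le_of_pow_le_pow_left₀ two_ne_zero (mul_nonneg (by positivity) (bh_nonneg P)) ?_
  rw [← Real.rpow_natCast, ← Real.rpow_mul hS0, mul_pow, ← Real.rpow_natCast (_ ^ _),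
    ← Real.rpow_mul (by positivity)]
  have h3 : 1 / (2 * (m : ℝ)) * ((2 : ℕ) : ℝ) = 1 / p * 2 - 1 := by
    rw [hq]; push_cast; field_simp; ring
  rw [h3]
  push_cast
  refine h1.trans ?_
  have h4 : (0 : ℝ) ≤ 1 / p * 2 - 1 := by
    rw [hq]; have : 0 < 1 / (m : ℝ) := by positivity
    linarith
  have := bh_card hm P hP
  have := bh_parseval P
  gcongr

theorem bh_lim (n : ℕ) :
    Tendsto (fun m : ℕ => (Nat.choose (m + n - 1) (n - 1) : ℝ) ^ (1 / (2 * (m : ℝ))))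
      atTop (nhds 1) := by
  have h := (tendsto_rpow_div_mul_add (n : ℝ) 2 (-2 * n) (by norm_num)).comp
    ((tendsto_natCast_atTop_atTop (R := ℝ)).comp (tendsto_add_atTop_nat n))
  refine tendsto_of_tendsto_of_tendsto_of_le_of_le' tendsto_const_nhds h ?_ ?_
  · filter_upwards [eventually_ge_atTop 1] with m hm
    refine Real.one_le_rpow ?_ (by positivity)
    exact_mod_cast Nat.choose_pos (by omega)
  · filter_upwards [eventually_ge_atTop 1] with m hm
    have e : (n : ℝ) / (2 * ((m + n : ℕ) : ℝ) + -2 * n) = n * (1 / (2 * (m : ℝ))) := by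
      push_cast
      rw [show (2 * ((m : ℝ) + n) + -2 * n) = 2 * m by ring]; ring
    simp only [Function.comp]
    rw [e, Real.rpow_mul (by positivity), Real.rpow_natCast]
    refine Real.rpow_le_rpow (by positivity) ?_ (by positivity)
    have h1 : Nat.choose (m + n - 1) (n - 1) ≤ (m + n) ^ n :=
      (Nat.choose_le_pow _ _).trans ((Nat.pow_le_pow_left (by omega) _).trans
        (Nat.pow_le_pow_right (by omega) (by omega)))
    exact_mod_cast h1

end BHaux

theorem complex_BH_contractive (n : ℕ) :
    Tendsto (fun m : ℕ => (Nat.choose (m + n - 1) (n - 1) : ℝ) ^ (1 / (2 * (m : ℝ))))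
      atTop (nhds 1) ∧
    (∀ m : ℕ, 0 < m → ∀ P : MvPolynomial (Fin n) ℂ, P.IsHomogeneous m →
      lpNormC (2 * m / (m + 1)) P ≤
        (Nat.choose (m + n - 1) (n - 1) : ℝ) ^ (1 / (2 * (m : ℝ))) * supNormC P) ∧
    ∃ D : ℕ → ℝ, Tendsto D atTop (nhds 1) ∧
      ∀ m : ℕ, 0 < m → ∀ P : MvPolynomial (Fin n) ℂ, P.IsHomogeneous m →
        lpNormC (2 * m / (m + 1)) P ≤ D m * supNormC P := by
  exact ⟨bh_lim n, fun m hm P hP => bh_main hm P hP, _, bh_lim n,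
    fun m hm P hP => bh_main hm P hP⟩
end
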